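/- arXiv:2512.17656 — 5 statements merged into one kernel-verified Lean document; each statement's English description precedes it below -/
import Mathlib

section
/- Fix p = (a1, a2, b1, b2) ∈ ℝ⁴. For every z = (x1, x2, y1, y2) ∈ ℝ⁴, (x1·y2 − x2·y1)² ≥ 4·h4(p)·h̃4(z) + 4·h5(p)·h̃5(z) − 2·h4(p)² − 2·h5(p)² − (h4(z) + h5(z))², and equality holds at z = p. -/
/-!
Since `h4 - h5` is the determinant `z 0 * z 3 - z 1 * z 2`, its square equals
`2 h4² + 2 h5² - (h4 + h5)²` (`h3_eq`). For `h = h4, h5`, with Taylor expansion `h̃` at `p`,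
`h(z)² + h(p)² ≥ 2 h(p) h(z) ≥ 2 h(p) h̃(z)`, because `h(p) ≥ 0` and the convex quadratic `h`
lies above its tangent (`h4t_le`, `h5t_le`). Equality at `z = p` follows from `h̃(p) = h(p)`.
-/

/-- `h4(z) = ((x1+y2)² + x2² + y1²)/2`, with `z : Fin 4 → ℝ`,
`z 0 = x1`, `z 1 = x2`, `z 2 = y1`, `z 3 = y2`. -/
noncomputable def h4 (z : Fin 4 → ℝ) : ℝ := ((z 0 + z 3) ^ 2 + (z 1) ^ 2 + (z 2) ^ 2) / 2

/-- `h5(z) = (x1² + y2² + (x2+y1)²)/2`. -/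
noncomputable def h5 (z : Fin 4 → ℝ) : ℝ := ((z 0) ^ 2 + (z 3) ^ 2 + (z 1 + z 2) ^ 2) / 2

/-- First-order Taylor expansion of `h4` at the local point `p`. -/
noncomputable def h4t (p z : Fin 4 → ℝ) : ℝ :=
  (p 0 + p 3) * (z 0 + z 3) + p 1 * z 1 + p 2 * z 2 - h4 p

/-- First-order Taylor expansion of `h5` at the local point `p`. -/
noncomputable def h5t (p z : Fin 4 → ℝ) : ℝ :=
  p 0 * z 0 + p 3 * z 3 + (p 1 + p 2) * (z 1 + z 2) - h5 p

/-- The identity `h3 = 2 h4² + 2 h5² − (h4 + h5)²`, which holds because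
`h4 z - h5 z = z 0 * z 3 - z 1 * z 2`. -/
lemma h3_eq (z : Fin 4 → ℝ) :
    (z 0 * z 3 - z 1 * z 2) ^ 2 = 2 * h4 z ^ 2 + 2 * h5 z ^ 2 - (h4 z + h5 z) ^ 2 := by
  unfold h4 h5; ring

lemma h4t_self (p : Fin 4 → ℝ) : h4t p p = h4 p := by unfold h4t h4; ring

lemma h5t_self (p : Fin 4 → ℝ) : h5t p p = h5 p := by unfold h5t h5; ring

lemma h4_nonneg (z : Fin 4 → ℝ) : 0 ≤ h4 z := by unfold h4; positivity

lemma h5_nonneg (z : Fin 4 → ℝ) : 0 ≤ h5 z := by unfold h5; positivity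

/-- The gap `h4 z - h4t p z` is `h4 (z - p)`, a half sum of squares. -/
lemma h4t_le (p z : Fin 4 → ℝ) : h4t p z ≤ h4 z := by
  unfold h4t h4
  linarith [sq_nonneg (z 0 + z 3 - (p 0 + p 3)), sq_nonneg (z 1 - p 1), sq_nonneg (z 2 - p 2)]

/-- The gap `h5 z - h5t p z` is `h5 (z - p)`, a half sum of squares. -/
lemma h5t_le (p z : Fin 4 → ℝ) : h5t p z ≤ h5 z := by
  unfold h5t h5
  linarith [sq_nonneg (z 0 - p 0), sq_nonneg (z 3 - p 3),
    sq_nonneg (z 1 + z 2 - (p 1 + p 2))]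

/-- Lower-bound inequality of Lemma 2: the concave surrogate lower-bounds
`h3(z) = (x1·y2 − x2·y1)²` and is tight at the local point `p`. -/
theorem h3_lower_bound (p : Fin 4 → ℝ) :
    (∀ z : Fin 4 → ℝ,
      (z 0 * z 3 - z 1 * z 2) ^ 2 ≥
        4 * h4 p * h4t p z + 4 * h5 p * h5t p z
          - 2 * (h4 p) ^ 2 - 2 * (h5 p) ^ 2 - (h4 z + h5 z) ^ 2) ∧
    (p 0 * p 3 - p 1 * p 2) ^ 2 =
      4 * h4 p * h4t p p + 4 * h5 p * h5t p p
        - 2 * (h4 p) ^ 2 - 2 * (h5 p) ^ 2 - (h4 p + h5 p) ^ 2 := by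
  refine ⟨fun z => ?_, ?_⟩
  · have k4 := mul_le_mul_of_nonneg_left (h4t_le p z) (h4_nonneg p)
    have k5 := mul_le_mul_of_nonneg_left (h5t_le p z) (h5_nonneg p)
    rw [h3_eq]
    linarith [sq_nonneg (h4 z - h4 p), sq_nonneg (h5 z - h5 p)]
  · rw [h3_eq, h4t_self, h5t_self]
    ring
end

section
/- Fix p = (a1, a2, b1, b2) ∈ ℝ⁴. The function z ↦ 4·h4(p)·h̃4(z) + 4·h5(p)·h̃5(z) − 2·h4(p)² − 2·h5(p)² − (h4(z) + h5(z))² is concave on ℝ⁴. -/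
/-- `h4 + h5` is convex, being a sum of squares of linear forms: its convexity gap at `z`, `w` with
weights `a + b = 1` is `a * b * (h4 (z - w) + h5 (z - w))`. -/
theorem convexOn_h4_add_h5 : ConvexOn ℝ Set.univ (fun z : Fin 4 → ℝ => h4 z + h5 z) := by
  refine ⟨convex_univ, fun z _ w _ a b ha hb hab => ?_⟩
  have hgap : 0 ≤ a * b * (h4 (z - w) + h5 (z - w)) := by
    unfold h4 h5
    positivity
  obtain rfl : b = 1 - a := by linarith
  simp only [h4, h5, Pi.add_apply, Pi.sub_apply, Pi.smul_apply, smul_eq_mul] at hgap ⊢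
  linarith

/-- The lower-bound surrogate of Lemma 2 is concave on `ℝ⁴`. -/
theorem lower_bound_concave (p : Fin 4 → ℝ) :
    ConcaveOn ℝ Set.univ (fun z : Fin 4 → ℝ =>
      4 * h4 p * h4t p z + 4 * h5 p * h5t p z
        - 2 * (h4 p) ^ 2 - 2 * (h5 p) ^ 2 - (h4 z + h5 z) ^ 2) := by
  have hsq : ConvexOn ℝ Set.univ (fun z : Fin 4 → ℝ => (h4 z + h5 z) ^ 2) :=
    convexOn_h4_add_h5.pow (fun z _ => by unfold h4 h5; positivity) 2
  -- The remaining terms are affine in `z`.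
  have haff : ConcaveOn ℝ Set.univ (fun z : Fin 4 → ℝ =>
      4 * h4 p * h4t p z + 4 * h5 p * h5t p z - 2 * (h4 p) ^ 2 - 2 * (h5 p) ^ 2) := by
    refine ⟨convex_univ, fun z _ w _ a b _ _ hab => le_of_eq ?_⟩
    obtain rfl : b = 1 - a := by linarith
    simp only [h4t, h5t, Pi.add_apply, Pi.smul_apply, smul_eq_mul]
    ring
  exact haff.sub hsq
end

section
/- Fix p = (a1, a2, b1, b2) ∈ ℝ⁴. For every z = (x1, x2, y1, y2) ∈ ℝ⁴, |x1·y2 − x2·y1| ≤ max{h4(z) − h̃5(z), h5(z) − h̃4(z)}; the right-hand side is nonnegative for every z; and equality holds at z = p. -/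
/-- Equation (55): `|x1·y2 − x2·y1| ≤ max{h4 − h̃5, h5 − h̃4}`, the bound is
nonnegative, and equality holds at the local point `p`. -/
theorem abs_bound (p : Fin 4 → ℝ) :
    (∀ z : Fin 4 → ℝ,
      |z 0 * z 3 - z 1 * z 2| ≤ max (h4 z - h5t p z) (h5 z - h4t p z)) ∧
    (∀ z : Fin 4 → ℝ, 0 ≤ max (h4 z - h5t p z) (h5 z - h4t p z)) ∧
    |p 0 * p 3 - p 1 * p 2| = max (h4 p - h5t p p) (h5 p - h4t p p) := by
  have key : ∀ z, z 0 * z 3 - z 1 * z 2 = h4 z - h5 z := fun z => by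
    unfold h4 h5; ring
  have bound : ∀ z : Fin 4 → ℝ,
      |z 0 * z 3 - z 1 * z 2| ≤ max (h4 z - h5t p z) (h5 z - h4t p z) := fun z => by
    have e4 := h4t_le p z
    have e5 := h5t_le p z
    rw [key, abs_eq_max_neg, neg_sub]
    exact max_le_max (by linarith) (by linarith)
  refine ⟨bound, fun z => (abs_nonneg _).trans (bound z), ?_⟩
  rw [key, h4t_self, h5t_self, abs_eq_max_neg, neg_sub]
end

section
/- Let c > 0, and fix local values a_r > 0 and d_r > 0. Define A1 = c/((ln 2)·d_r²·(d_r² + c)), A2 = log₂(1 + c/d_r²) + A1·d_r², and A3 = a_r/d_r². Then for every a ≥ 0 and every d > 0, a·log₂(1 + c/d²) ≥ −(A1/(2·A3))·a² − (A1·A3/2)·d⁴ + A2·a, and equality holds at (a, d) = (a_r, d_r). -/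
/-!
The function `t ↦ log (1 + c / t)` is convex on `t > 0`, so at `t = d²` it lies above its tangent
at `t = dr²` (`log_tangent_le`); in base 2 this reads `log₂ (1 + c / d²) ≥ A2 - A1 d²`.
Multiplying by `a ≥ 0` leaves the bilinear term `a d²`, which is at most
`a² / (2 A3) + A3 d⁴ / 2` because `(a - A3 d²)² ≥ 0`. Both inequalities are equalities at
`(ar, dr)`, since `ar = A3 dr²`.
-/

/-- The tangent-line lower bound of `t ↦ log (1 + c / t)` at `s`. It follows from `log x ≤ x - 1`
at the ratio `x = (1 + c / s) / (1 + c / t)`, where `x - 1` falls short of the linear term by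
`c (t - s)² / (s (s + c) (t + c))`. -/
theorem log_tangent_le {c s t : ℝ} (hc : 0 < c) (hs : 0 < s) (ht : 0 < t) :
    Real.log (1 + c / s) - c / (s * (s + c)) * (t - s) ≤ Real.log (1 + c / t) := by
  have h1 : 0 < 1 + c / s := by positivity
  have h2 : 0 < 1 + c / t := by positivity
  have h3 := Real.log_le_sub_one_of_pos (div_pos h1 h2)
  rw [Real.log_div h1.ne' h2.ne'] at h3
  have h4 : c / (s * (s + c)) * (t - s) - ((1 + c / s) / (1 + c / t) - 1)
      = c * (t - s) ^ 2 / (s * (s + c) * (t + c)) := by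
    have h5 : t + c ≠ 0 := by positivity
    have h6 : s + c ≠ 0 := by positivity
    field_simp
    ring
  have h7 : 0 ≤ c * (t - s) ^ 2 / (s * (s + c) * (t + c)) := by positivity
  linarith


/-- The concave surrogate of the per-slot throughput (equation (34)): for `a ≥ 0`
and `d > 0`, `a·log₂(1 + c/d²) ≥ −(A1/(2A3))·a² − (A1·A3/2)·d⁴ + A2·a`, with
equality at the local point `(a_r, d_r)`. -/
theorem throughput_surrogate (c ar dr : ℝ) (hc : 0 < c) (har : 0 < ar) (hdr : 0 < dr)
    (A1 A2 A3 : ℝ)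
    (hA1 : A1 = c / (Real.log 2 * dr ^ 2 * (dr ^ 2 + c)))
    (hA2 : A2 = Real.logb 2 (1 + c / dr ^ 2) + A1 * dr ^ 2)
    (hA3 : A3 = ar / dr ^ 2) :
    (∀ a d : ℝ, 0 ≤ a → 0 < d →
      a * Real.logb 2 (1 + c / d ^ 2) ≥
        -(A1 / (2 * A3)) * a ^ 2 - (A1 * A3 / 2) * d ^ 4 + A2 * a) ∧
    ar * Real.logb 2 (1 + c / dr ^ 2) =
      -(A1 / (2 * A3)) * ar ^ 2 - (A1 * A3 / 2) * dr ^ 4 + A2 * ar := by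
  have hl : 0 < Real.log 2 := Real.log_pos one_lt_two
  have hA1pos : 0 < A1 := by rw [hA1]; positivity
  have hA3pos : 0 < A3 := by rw [hA3]; positivity
  refine ⟨fun a d ha hd => ?_, ?_⟩
  · have htan : A2 - A1 * d ^ 2 ≤ Real.logb 2 (1 + c / d ^ 2) := by
      have h := div_le_div_of_nonneg_right
        (log_tangent_le hc (pow_pos hdr 2) (pow_pos hd 2)) hl.le
      have hslope : A1 = c / (dr ^ 2 * (dr ^ 2 + c)) / Real.log 2 := by
        rw [hA1, div_div]
        ring_nf
      have he : A2 - A1 * d ^ 2 = (Real.log (1 + c / dr ^ 2)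
          - c / (dr ^ 2 * (dr ^ 2 + c)) * (d ^ 2 - dr ^ 2)) / Real.log 2 := by
        rw [hA2, hslope, Real.logb]
        ring
      rw [he]
      exact h
    have hmul := mul_le_mul_of_nonneg_left htan ha
    have hsq : A1 / (2 * A3) * a ^ 2 + A1 * A3 / 2 * d ^ 4 - A1 * (a * d ^ 2)
        = A1 / (2 * A3) * (a - A3 * d ^ 2) ^ 2 := by
      field_simp
      ring
    have hnonneg : 0 ≤ A1 / (2 * A3) * (a - A3 * d ^ 2) ^ 2 := by positivity
    linarith
  · have har' : ar = A3 * dr ^ 2 := by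
      rw [hA3]
      field_simp
    rw [hA2, har']
    field_simp
    ring
end

section
/- Let η ≥ 0 and define h2(u, v) = η²/(u³·v³) + 8η/(u³·v²) + 8η/(u²·v³) + 64/(u²·v²). Then h2 is convex on the convex set {(u, v) ∈ ℝ² : u > 0 and v > 0}; moreover, for each fixed v > 0 the function u ↦ h2(u, v) is antitone (nonincreasing) on (0, ∞), and symmetrically for each fixed u > 0 the function v ↦ h2(u, v) is antitone on (0, ∞). -/
/-!
The weight `h2` is a combination, with nonnegative coefficients `η²`, `8η`, `8η`, `64`, of monomials
`1 / (uᵐ vⁿ)`. Each monomial is log-convex on the positive quadrant, being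
`exp (-(m log u + n log v))` with `log` concave, hence it is convex (`convexOn_one_div_pow_mul_pow`).
Monotonicity in each argument holds term by term.
-/

/-- Log-convexity of a negative-exponent monomial gives its joint convexity on the quadrant. -/
lemma convexOn_one_div_pow_mul_pow (m n : ℕ) :
    ConvexOn ℝ {p : ℝ × ℝ | 0 < p.1 ∧ 0 < p.2} (fun p : ℝ × ℝ => 1 / (p.1 ^ m * p.2 ^ n)) := by
  have key : ∀ p : ℝ × ℝ, 0 < p.1 → 0 < p.2 →
      1 / (p.1 ^ m * p.2 ^ n) = Real.exp (-(m * Real.log p.1 + n * Real.log p.2)) := by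
    intro p h1 h2
    rw [Real.exp_neg, Real.exp_add, Real.exp_nat_mul, Real.exp_nat_mul, Real.exp_log h1,
      Real.exp_log h2, one_div]
  have hconv : Convex ℝ {p : ℝ × ℝ | 0 < p.1 ∧ 0 < p.2} :=
    (convex_Ioi (0 : ℝ)).prod (convex_Ioi (0 : ℝ))
  refine ⟨hconv, ?_⟩
  intro p hp q hq a b ha hb hab
  have hr := hconv hp hq ha hb hab
  simp only [key _ hp.1 hp.2, key _ hq.1 hq.2, key _ hr.1 hr.2]
  refine le_trans ?_ (convexOn_exp.2 (Set.mem_univ _) (Set.mem_univ _) ha hb hab)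
  have h1 := mul_le_mul_of_nonneg_left
    (strictConcaveOn_log_Ioi.concaveOn.2 hp.1 hq.1 ha hb hab) (Nat.cast_nonneg (α := ℝ) m)
  have h2 := mul_le_mul_of_nonneg_left
    (strictConcaveOn_log_Ioi.concaveOn.2 hp.2 hq.2 ha hb hab) (Nat.cast_nonneg (α := ℝ) n)
  simp only [smul_eq_mul, Prod.fst_add, Prod.snd_add, Prod.smul_fst, Prod.smul_snd] at h1 h2 ⊢
  apply Real.exp_le_exp.2
  linarith

/-- The pairwise weight `h2(u, v) = η²/(u³v³) + 8η/(u³v²) + 8η/(u²v³) + 64/(u²v²)`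
is convex on the positive quadrant and antitone in each argument. -/
theorem h2_convex_antitone (η : ℝ) (hη : 0 ≤ η)
    (h2 : ℝ → ℝ → ℝ)
    (hh2 : ∀ u v, h2 u v =
      η ^ 2 / (u ^ 3 * v ^ 3) + 8 * η / (u ^ 3 * v ^ 2)
        + 8 * η / (u ^ 2 * v ^ 3) + 64 / (u ^ 2 * v ^ 2)) :
    ConvexOn ℝ {p : ℝ × ℝ | 0 < p.1 ∧ 0 < p.2} (fun p : ℝ × ℝ => h2 p.1 p.2) ∧
    (∀ v : ℝ, 0 < v → AntitoneOn (fun u => h2 u v) (Set.Ioi 0)) ∧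
    (∀ u : ℝ, 0 < u → AntitoneOn (fun v => h2 u v) (Set.Ioi 0)) := by
  refine ⟨?_, ?_, ?_⟩
  · have h := ((((convexOn_one_div_pow_mul_pow 3 3).smul (sq_nonneg η)).add
      ((convexOn_one_div_pow_mul_pow 3 2).smul (by positivity : 0 ≤ 8 * η))).add
      ((convexOn_one_div_pow_mul_pow 2 3).smul (by positivity : 0 ≤ 8 * η))).add
      ((convexOn_one_div_pow_mul_pow 2 2).smul (by norm_num : (0 : ℝ) ≤ 64))
    refine h.congr fun p _ => ?_
    simp only [hh2, Pi.add_apply, smul_eq_mul, mul_one_div]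
  · intro v hv x hx y _ hxy
    have hx : 0 < x := hx
    simp only [hh2]
    gcongr
  · intro u hu x hx y _ hxy
    have hx : 0 < x := hx
    simp only [hh2]
    gcongr
end
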